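/- arXiv:2111.04066 — 2 statements merged into one kernel-verified Lean document; each statement's English description precedes it below -/
import Mathlib

section
/- Let d>0 be an arbitrary real. There exists an L>0 such that for any δ∈(0,1) the following holds with high probability over the choice of G=(V,E)∼G(n,d/n). For Δ = 1/(δ·log(1/δ)), for all integers k ≥ δ·log n and every vertex v∈V: the number of connected sets S⊆V containing v with |S|=k is at most (2e)^{ΔLk}, and moreover every such set contains at least k/2 vertices of degree less than LΔ. -/
/-!
The proof has a probabilistic and a deterministic half, joined by the event that some connected
set `S` with `|S| ≥ δ log n` has total degree more than `cΔ|S|`, where `c = 18 + 4d`.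

*Heavy connected sets are unlikely* (`erProb_heavy_le`). A connected set of size `k` carries a
spanning tree, encoded by one of the `k ^ k` parent maps `S → S` (`exists_treeEdges`). If its total
degree exceeds `cΔk`, then at least `cΔk/2` edges touch it. For a fixed set and tree, the
exponential Markov inequality with parameter `log Δ` bounds the probability that the tree is present
and so many edges touch the set by
`(dΔ/n)^(k-1) exp(dΔk) exp(-(log Δ) cΔk/2)` (`erProb_tree_and_many_le`). Multiplying by
`C(n,k) k^k ≤ (en)^k` gives at most `(n/d) exp(-3k/δ)`, because `Δ ≥ e` and `1/δ ≤ 2 Δ log Δ`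
(`Delta_props`). As `k ≥ δ log n`, this is at most `1/(dn²)`, and the sum over `k ≤ n` tends to `0`.

*Without heavy sets both claims hold with `L = 2c`* (`conclusion_of_not_heavy`). At most half of the
vertices of `S` can have degree `≥ LΔ`, by averaging. The outer boundary of `S` has at most `cΔk`
vertices, and the number of connected `k`-sets containing `v` with boundary of size at most `m` is
at most `2^(k+m)`: a uniformly random vertex set `W` has `S` as its component of `v` with
probability `2^(-k-|∂S|)`, and these events are disjoint for distinct `S` (`card_connected_le`).
-/

open Classical Filter

/-- The degree of a vertex. -/
noncomputable def deg {V : Type*} (G : SimpleGraph V) (v : V) : ℕ :=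
  Nat.card {u : V // G.Adj v u}

/-- The number of edges of a graph. -/
noncomputable def edgeCount {V : Type*} (G : SimpleGraph V) : ℕ :=
  Nat.card G.edgeSet

/-- The probability that the Erdős–Rényi random graph `G(n,p)` satisfies property `P`:
each of the `n(n-1)/2` possible edges is present independently with probability `p`. -/
noncomputable def erProb (n : ℕ) (p : ℝ) (P : SimpleGraph (Fin n) → Prop) : ℝ :=
  ∑ G : SimpleGraph (Fin n),
    (if P G then p ^ edgeCount G * (1 - p) ^ (n.choose 2 - edgeCount G) else 0)

/-! ### The random graph measure -/

/-- The set of potential edges on `Fin n`. -/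
noncomputable def allEdges (n : ℕ) : Finset (Sym2 (Fin n)) :=
  Finset.univ.filter (fun e => ¬ e.IsDiag)

lemma card_allEdges (n : ℕ) : (allEdges n).card = n.choose 2 := by
  have h := SimpleGraph.card_edgeFinset_top_eq_card_choose_two (V := Fin n)
  rw [Fintype.card_fin] at h
  rw [← h]
  congr 1
  ext e
  simp [allEdges]

lemma mem_allEdges_of_mem {n : ℕ} {G : SimpleGraph (Fin n)} {e : Sym2 (Fin n)}
    (h : e ∈ G.edgeSet) : e ∈ allEdges n := by
  simp only [allEdges, Finset.mem_filter, Finset.mem_univ, true_and]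
  exact G.not_isDiag_of_mem_edgeSet h

/-- Independence of the edges: the sum over all graphs of a product over potential edges
factorizes. -/
lemma sum_graph_prod (n : ℕ) (a b : Sym2 (Fin n) → ℝ) :
    ∑ G : SimpleGraph (Fin n), ∏ e ∈ allEdges n, (if e ∈ G.edgeSet then a e else b e)
      = ∏ e ∈ allEdges n, (a e + b e) := by
  rw [Finset.prod_add]
  refine Finset.sum_nbij' (fun G => (allEdges n).filter (fun e => e ∈ G.edgeSet))
    (fun t => SimpleGraph.fromEdgeSet (t : Set (Sym2 (Fin n)))) ?_ ?_ ?_ ?_ ?_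
  · intro G _
    simp
  · intro t _
    simp
  · intro G _
    rw [← SimpleGraph.edgeSet_inj, SimpleGraph.edgeSet_fromEdgeSet]
    ext e
    simp only [Finset.coe_filter, Set.mem_sdiff, Set.mem_ofPred_eq]
    constructor
    · exact fun h => h.1.2
    · exact fun h => ⟨⟨mem_allEdges_of_mem h, h⟩, G.not_isDiag_of_mem_edgeSet h⟩
  · intro t ht
    rw [Finset.mem_powerset] at ht
    ext e
    simp only [Finset.mem_filter, SimpleGraph.edgeSet_fromEdgeSet, Set.mem_sdiff]
    constructor
    · exact fun h => h.2.1
    · intro h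
      have := ht h
      refine ⟨this, h, ?_⟩
      simpa [allEdges] using this
  · intro G _
    rw [Finset.prod_ite, Finset.filter_not]

lemma weight_eq_prod {n : ℕ} (p : ℝ) (G : SimpleGraph (Fin n)) :
    p ^ edgeCount G * (1 - p) ^ (n.choose 2 - edgeCount G)
      = ∏ e ∈ allEdges n, (if e ∈ G.edgeSet then p else 1 - p) := by
  have hc : ((allEdges n).filter (fun e => e ∈ G.edgeSet)).card = edgeCount G := by
    rw [edgeCount, Nat.card_eq_fintype_card, ← Set.toFinset_card]
    congr 1
    ext e
    simp only [Finset.mem_filter, Set.mem_toFinset]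
    exact ⟨fun h => h.2, fun h => ⟨mem_allEdges_of_mem h, h⟩⟩
  rw [Finset.prod_ite, Finset.prod_const, Finset.prod_const, hc, Finset.filter_not,
    Finset.card_sdiff_of_subset (Finset.filter_subset _ _), hc, card_allEdges]

lemma weight_nonneg {n : ℕ} {p : ℝ} (hp0 : 0 ≤ p) (hp1 : p ≤ 1) (G : SimpleGraph (Fin n)) :
    0 ≤ p ^ edgeCount G * (1 - p) ^ (n.choose 2 - edgeCount G) :=
  mul_nonneg (pow_nonneg hp0 _) (pow_nonneg (by linarith) _)

lemma sum_weight (n : ℕ) (p : ℝ) :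
    ∑ G : SimpleGraph (Fin n), p ^ edgeCount G * (1 - p) ^ (n.choose 2 - edgeCount G) = 1 := by
  simp_rw [weight_eq_prod]
  rw [sum_graph_prod n (fun _ => p) (fun _ => 1 - p)]
  simp

lemma erProb_add_not (n : ℕ) (p : ℝ) (P : SimpleGraph (Fin n) → Prop) :
    erProb n p P + erProb n p (fun G => ¬ P G) = 1 := by
  rw [← sum_weight n p, erProb, erProb, ← Finset.sum_add_distrib]
  refine Finset.sum_congr rfl fun G _ => ?_
  by_cases h : P G <;> simp [h]

lemma erProb_nonneg {n : ℕ} {p : ℝ} (hp0 : 0 ≤ p) (hp1 : p ≤ 1)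
    (P : SimpleGraph (Fin n) → Prop) : 0 ≤ erProb n p P :=
  Finset.sum_nonneg fun G _ => by
    split_ifs
    · exact weight_nonneg hp0 hp1 G
    · exact le_rfl

lemma erProb_mono {n : ℕ} {p : ℝ} (hp0 : 0 ≤ p) (hp1 : p ≤ 1)
    {P Q : SimpleGraph (Fin n) → Prop} (h : ∀ G, P G → Q G) : erProb n p P ≤ erProb n p Q := by
  refine Finset.sum_le_sum fun G _ => ?_
  have := weight_nonneg hp0 hp1 G
  by_cases hP : P G
  · simp [hP, h G hP]
  · rw [if_neg hP]
    split_ifs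
    · exact this
    · exact le_rfl

/-- The union bound. -/
lemma erProb_exists_le {n : ℕ} {p : ℝ} (hp0 : 0 ≤ p) (hp1 : p ≤ 1) {ι : Type*} [Fintype ι]
    (P : ι → SimpleGraph (Fin n) → Prop) :
    erProb n p (fun G => ∃ i, P i G) ≤ ∑ i, erProb n p (P i) := by
  unfold erProb
  rw [Finset.sum_comm]
  refine Finset.sum_le_sum fun G _ => ?_
  have hw := weight_nonneg hp0 hp1 G
  have hnn : ∀ i ∈ Finset.univ, 0 ≤ (if P i G then
      p ^ edgeCount G * (1 - p) ^ (n.choose 2 - edgeCount G) else 0) := by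
    intro i _
    split_ifs
    · exact hw
    · exact le_rfl
  split_ifs with h
  · obtain ⟨i, hi⟩ := h
    have := Finset.single_le_sum hnn (Finset.mem_univ i)
    rwa [if_pos hi] at this
  · exact Finset.sum_nonneg hnn

/-! ### Edges touching a vertex set -/

/-- The edges of `G` with at least one endpoint in `S`. -/
noncomputable def touching {n : ℕ} (G : SimpleGraph (Fin n)) (S : Finset (Fin n)) :
    Finset (Sym2 (Fin n)) :=
  (allEdges n).filter (fun e => e ∈ G.edgeSet ∧ ∃ u ∈ S, u ∈ e)

lemma card_touch_le {n : ℕ} (S : Finset (Fin n)) :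
    ((allEdges n).filter (fun e => ∃ u ∈ S, u ∈ e)).card ≤ S.card * n := by
  have : (allEdges n).filter (fun e => ∃ u ∈ S, u ∈ e) ⊆
      (S ×ˢ (Finset.univ : Finset (Fin n))).image (fun x => s(x.1, x.2)) := by
    intro e he
    obtain ⟨u, hu, hue⟩ := (Finset.mem_filter.1 he).2
    obtain ⟨w, rfl⟩ := hue
    exact Finset.mem_image.2 ⟨(u, w), by simp [hu], rfl⟩
  calc _ ≤ _ := Finset.card_le_card this
    _ ≤ _ := Finset.card_image_le
    _ = _ := by simp

/-- Chernoff bound, jointly with the presence of a prescribed edge set: the exponential moment of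
the number of edges touching `S`, restricted to graphs containing `T`, factorizes over edges. -/
lemma erProb_tree_and_many_le {n : ℕ} {p s M : ℝ} (hp0 : 0 ≤ p) (hp1 : p ≤ 1) (hs : 0 ≤ s)
    (S : Finset (Fin n)) (T : Finset (Sym2 (Fin n))) (hT : T ⊆ allEdges n)
    (hTS : ∀ e ∈ T, ∃ u ∈ S, u ∈ e) :
    erProb n p (fun G => (∀ e ∈ T, e ∈ G.edgeSet) ∧ M ≤ (touching G S).card)
      ≤ (p * Real.exp s) ^ T.card * Real.exp (p * Real.exp s * (S.card * n))
          * Real.exp (-(s * M)) := by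
  set a : Sym2 (Fin n) → ℝ := fun e => p * (if ∃ u ∈ S, u ∈ e then Real.exp s else 1) with ha
  set b : Sym2 (Fin n) → ℝ := fun e => if e ∈ T then 0 else 1 - p with hb
  have ha0 : ∀ e, 0 ≤ a e := by
    intro e
    refine mul_nonneg hp0 ?_
    split_ifs <;> positivity
  have hb0 : ∀ e, 0 ≤ b e := by
    intro e
    simp only [hb]
    split_ifs
    · exact le_rfl
    · linarith
  have step1 : erProb n p (fun G => (∀ e ∈ T, e ∈ G.edgeSet) ∧ M ≤ (touching G S).card) ≤
      ∑ G : SimpleGraph (Fin n), Real.exp (-(s * M)) *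
        ∏ e ∈ allEdges n, (if e ∈ G.edgeSet then a e else b e) := by
    refine Finset.sum_le_sum fun G _ => ?_
    have hprod0 : 0 ≤ ∏ e ∈ allEdges n, (if e ∈ G.edgeSet then a e else b e) := by
      refine Finset.prod_nonneg fun e _ => ?_
      split_ifs
      · exact ha0 e
      · exact hb0 e
    split_ifs with h
    · obtain ⟨hTG, hM⟩ := h
      have hw := weight_nonneg hp0 hp1 G
      have heq : ∏ e ∈ allEdges n, (if e ∈ G.edgeSet then a e else b e)
          = (p ^ edgeCount G * (1 - p) ^ (n.choose 2 - edgeCount G))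
            * Real.exp (s * (touching G S).card) := by
        have h2 : Real.exp (s * (touching G S).card) = ∏ e ∈ allEdges n,
            (if e ∈ G.edgeSet ∧ ∃ u ∈ S, u ∈ e then Real.exp s else 1) := by
          rw [← Finset.prod_filter, Finset.prod_const, ← Real.exp_nat_mul, mul_comm]
          rfl
        rw [weight_eq_prod, h2, ← Finset.prod_mul_distrib]
        refine Finset.prod_congr rfl fun e _ => ?_
        by_cases he : e ∈ G.edgeSet
        · simp [he, ha]
        · have : e ∉ T := fun h => he (hTG e h)
          simp [he, hb, this]
      rw [heq]
      have : 1 ≤ Real.exp (-(s * M)) * Real.exp (s * (touching G S).card) := by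
        rw [← Real.exp_add]
        apply Real.one_le_exp
        nlinarith
      calc _ ≤ (p ^ edgeCount G * (1 - p) ^ (n.choose 2 - edgeCount G)) *
            (Real.exp (-(s * M)) * Real.exp (s * (touching G S).card)) :=
            le_mul_of_one_le_right hw this
        _ = _ := by ring
    · positivity
  rw [← Finset.mul_sum, sum_graph_prod] at step1
  refine step1.trans ?_
  rw [mul_comm]
  refine mul_le_mul_of_nonneg_right ?_ (Real.exp_pos _).le
  set c : ℝ := p * Real.exp s with hc
  have hc0 : 0 ≤ c := by positivity
  have hce : 1 ≤ Real.exp c := Real.one_le_exp hc0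
  calc ∏ e ∈ allEdges n, (a e + b e)
      ≤ ∏ e ∈ allEdges n, ((if e ∈ T then c else 1) *
          (if ∃ u ∈ S, u ∈ e then Real.exp c else 1)) := by
        refine Finset.prod_le_prod (fun e _ => add_nonneg (ha0 e) (hb0 e)) fun e _ => ?_
        by_cases heT : e ∈ T
        · have := hTS e heT
          simp only [ha, hb, heT, this, if_true]
          nlinarith
        · by_cases ht : ∃ u ∈ S, u ∈ e
          · simp only [ha, hb, heT, ht, if_true, if_false]
            have := Real.add_one_le_exp c
            linarith
          · simp only [ha, hb, heT, ht, if_false]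
            linarith
    _ = c ^ T.card * Real.exp c ^ ((allEdges n).filter (fun e => ∃ u ∈ S, u ∈ e)).card := by
        rw [Finset.prod_mul_distrib, ← Finset.prod_filter, ← Finset.prod_filter,
          Finset.prod_const, Finset.prod_const, Finset.filter_mem_eq_inter,
          Finset.inter_eq_right.2 hT]
    _ ≤ c ^ T.card * Real.exp c ^ (S.card * n) := by
        refine mul_le_mul_of_nonneg_left ?_ (by positivity)
        exact pow_le_pow_right₀ hce (card_touch_le S)
    _ = _ := by
        rw [← Real.exp_nat_mul]
        push_cast
        ring_nf

/-! ### Spanning trees as parent maps -/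

/-- The non-loop edges `{u, f u}` of a parent map `f` on `S`. -/
noncomputable def treeEdges {n : ℕ} {S : Finset (Fin n)} (f : S → S) : Finset (Sym2 (Fin n)) :=
  (Finset.univ.image (fun u : S => s((u : Fin n), (f u : Fin n)))).filter (fun e => ¬ e.IsDiag)

lemma treeEdges_subset {n : ℕ} {S : Finset (Fin n)} (f : S → S) :
    treeEdges f ⊆ allEdges n := by
  intro e he
  simp only [treeEdges, Finset.mem_filter] at he
  simp [allEdges, he.2]

lemma treeEdges_touch {n : ℕ} {S : Finset (Fin n)} (f : S → S) :
    ∀ e ∈ treeEdges f, ∃ u ∈ S, u ∈ e := by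
  intro e he
  simp only [treeEdges, Finset.mem_filter, Finset.mem_image] at he
  obtain ⟨⟨u, _, rfl⟩, _⟩ := he
  exact ⟨u, u.2, by simp⟩

/-- A connected set carries a spanning tree, encoded by the map sending each vertex to a neighbour
closer to a fixed root (and the root to itself). -/
lemma exists_treeEdges {n : ℕ} (G : SimpleGraph (Fin n)) (S : Finset (Fin n))
    (h : (G.induce (S : Set (Fin n))).Connected) :
    ∃ f : S → S, (∀ e ∈ treeEdges f, e ∈ G.edgeSet) ∧ (treeEdges f).card + 1 = S.card := by
  set H := G.induce (S : Set (Fin n)) with hH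
  obtain ⟨r⟩ := h.nonempty
  have key : ∀ u : (S : Set (Fin n)), ∃ w : (S : Set (Fin n)),
      (u = r → w = r) ∧ (u ≠ r → H.Adj u w ∧ H.dist w r < H.dist u r) := by
    intro u
    by_cases hu : u = r
    · exact ⟨r, fun _ => rfl, fun h => absurd hu h⟩
    · obtain ⟨p, hp⟩ := h.exists_walk_length_eq_dist u r
      cases p with
      | nil => exact absurd rfl hu
      | cons hadj q =>
        refine ⟨_, fun h => absurd h hu, fun _ => ⟨hadj, ?_⟩⟩
        have := SimpleGraph.dist_le q
        simp only [SimpleGraph.Walk.length_cons] at hp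
        omega
  choose f hf1 hf2 using key
  have hadj : ∀ u, u ≠ r → G.Adj (u : Fin n) (f u : Fin n) := fun u hu => (hf2 u hu).1
  have hT : treeEdges (S := S) f =
      (Finset.univ.erase (r : S)).image (fun u : S => s((u : Fin n), (f u : Fin n))) := by
    ext e
    simp only [treeEdges, Finset.mem_filter, Finset.mem_image, Finset.mem_erase,
      Finset.mem_univ, and_true, true_and]
    constructor
    · rintro ⟨⟨u, rfl⟩, hd⟩
      refine ⟨u, ?_, rfl⟩
      rintro rfl
      apply hd
      rw [hf1 u rfl]
      simp
    · rintro ⟨u, hu, rfl⟩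
      refine ⟨⟨u, rfl⟩, ?_⟩
      have := (hadj u hu).ne
      simpa using this
  refine ⟨f, ?_, ?_⟩
  · rw [hT]
    intro e he
    simp only [Finset.mem_image, Finset.mem_erase, Finset.mem_univ, and_true] at he
    obtain ⟨u, hu, rfl⟩ := he
    exact hadj u hu
  · rw [hT, Finset.card_image_of_injOn, Finset.card_erase_of_mem (Finset.mem_univ _),
      Finset.card_univ, Fintype.card_coe]
    · have : 0 < S.card := Finset.card_pos.2 ⟨r, r.2⟩
      omega
    · -- two vertices sharing an edge would each be the other's parent, hence each closer to `r`
      intro u hu w hw huw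
      simp only [Finset.coe_erase, Set.mem_sdiff, Set.mem_singleton_iff] at hu hw
      simp only [Sym2.eq_iff] at huw
      rcases huw with ⟨h1, _⟩ | ⟨h1, h2⟩
      · exact Subtype.ext h1
      · have h1' : u = f w := Subtype.ext h1
        have h2' : f u = w := Subtype.ext h2
        have a1 := (hf2 u hu.2).2
        have a2 := (hf2 w hw.2).2
        rw [h2'] at a1
        rw [← h1'] at a2
        omega

/-! ### Degrees, boundaries and the number of connected sets -/

lemma deg_eq {n : ℕ} (G : SimpleGraph (Fin n)) (u : Fin n) :
    deg G u = (Finset.univ.filter (fun w => G.Adj u w)).card := by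
  rw [deg, Nat.card_eq_fintype_card, Fintype.card_subtype]

lemma sum_deg_le {n : ℕ} (G : SimpleGraph (Fin n)) (S : Finset (Fin n)) :
    ∑ u ∈ S, deg G u ≤ 2 * (touching G S).card := by
  set D : Finset (Σ _ : Fin n, Fin n) :=
    S.sigma (fun u => Finset.univ.filter (fun w => G.Adj u w)) with hD
  have hcard : ∑ u ∈ S, deg G u = D.card := by
    rw [hD, Finset.card_sigma]
    exact Finset.sum_congr rfl fun u _ => deg_eq G u
  rw [hcard]
  refine (Finset.card_le_mul_card_image (f := fun x => s(x.1, x.2)) D 2 ?_).trans ?_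
  · intro e _
    induction e with
    | _ x y =>
      refine (Finset.card_le_card (t := {⟨x, y⟩, ⟨y, x⟩}) ?_).trans Finset.card_le_two
      rintro ⟨u, w⟩ h
      have := (Finset.mem_filter.1 h).2
      simp only [Sym2.eq_iff] at this
      rcases this with ⟨rfl, rfl⟩ | ⟨rfl, rfl⟩ <;> simp
  · refine Nat.mul_le_mul_left 2 (Finset.card_le_card ?_)
    intro e he
    obtain ⟨⟨u, w⟩, hx, rfl⟩ := Finset.mem_image.1 he
    simp only [hD, Finset.mem_sigma, Finset.mem_filter, Finset.mem_univ, true_and] at hx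
    have h2 : s(u, w) ∈ G.edgeSet := hx.2
    exact Finset.mem_filter.2 ⟨mem_allEdges_of_mem h2, h2, u, hx.1, by simp⟩

/-- The outer vertex boundary of `S`. -/
noncomputable def bdry {n : ℕ} (G : SimpleGraph (Fin n)) (S : Finset (Fin n)) :
    Finset (Fin n) :=
  Finset.univ.filter (fun w => w ∉ S ∧ ∃ u ∈ S, G.Adj u w)

lemma card_bdry_le {n : ℕ} (G : SimpleGraph (Fin n)) (S : Finset (Fin n)) :
    (bdry G S).card ≤ ∑ u ∈ S, deg G u := by
  have : bdry G S ⊆ S.biUnion (fun u => Finset.univ.filter (fun w => G.Adj u w)) := by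
    intro w hw
    obtain ⟨_, u, hu, ha⟩ := (Finset.mem_filter.1 hw).2
    exact Finset.mem_biUnion.2 ⟨u, hu, by simpa using ha⟩
  refine (Finset.card_le_card this).trans (Finset.card_biUnion_le.trans (le_of_eq ?_))
  exact Finset.sum_congr rfl fun u _ => (deg_eq G u).symm

/-- A connected set meeting `S` and avoiding the boundary of `S` lies inside `S`. -/
lemma subset_of_disjoint_bdry {n : ℕ} (G : SimpleGraph (Fin n)) (S S' : Finset (Fin n))
    (v : Fin n) (hv : v ∈ S) (hv' : v ∈ S')
    (h : (G.induce (S' : Set (Fin n))).Connected) (hd : ∀ w ∈ S', w ∉ bdry G S) : S' ⊆ S := by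
  intro w hw
  have hr := h.preconnected ⟨v, hv'⟩ ⟨w, hw⟩
  obtain ⟨p⟩ := hr
  have aux : ∀ (a b : (S' : Set (Fin n))) (_ : (G.induce (S' : Set (Fin n))).Walk a b),
      (a : Fin n) ∈ S → (b : Fin n) ∈ S := by
    intro a b p
    induction p with
    | nil => exact id
    | @cons a b c hadj q ih =>
      intro ha
      apply ih
      by_contra hb
      refine hd b b.2 (Finset.mem_filter.2 ⟨Finset.mem_univ _, hb, a, ha, hadj⟩)
  exact aux _ _ p hv

/-- Site percolation at density `1/2`, as a count: the families
`{W : S ⊆ W, W ∩ ∂S = ∅}`, over connected `S ∋ v`, are pairwise disjoint, because `S` is the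
component of `v` in `G[W]`. -/
lemma card_connected_le {n : ℕ} (G : SimpleGraph (Fin n)) (v : Fin n) (k m : ℕ)
    (h : ∀ S : Finset (Fin n), v ∈ S → S.card = k →
      (G.induce (S : Set (Fin n))).Connected → (bdry G S).card ≤ m) :
    Nat.card {S : Finset (Fin n) //
      v ∈ S ∧ S.card = k ∧ (G.induce (S : Set (Fin n))).Connected} ≤ 2 ^ (k + m) := by
  rw [Nat.card_eq_fintype_card, Fintype.card_subtype]
  set F := Finset.univ.filter (fun S : Finset (Fin n) =>
    v ∈ S ∧ S.card = k ∧ (G.induce (S : Set (Fin n))).Connected) with hF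
  have hmem : ∀ S ∈ F, v ∈ S ∧ S.card = k ∧ (G.induce (S : Set (Fin n))).Connected :=
    fun S hS => (Finset.mem_filter.1 hS).2
  -- `I S` is the interval of vertex sets containing `S` and missing the boundary of `S`
  set I : Finset (Fin n) → Finset (Finset (Fin n)) := fun S => Finset.Icc S (bdry G S)ᶜ with hI
  have hdisj : ∀ S ∈ F, ∀ S' ∈ F, S ≠ S' → Disjoint (I S) (I S') := by
    intro S hS S' hS' hne
    rw [Finset.disjoint_left]
    intro W hW hW'
    apply hne
    simp only [hI, Finset.mem_Icc] at hW hW'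
    obtain ⟨a1, _, a3⟩ := hmem S hS
    obtain ⟨b1, _, b3⟩ := hmem S' hS'
    apply Finset.Subset.antisymm
    · refine subset_of_disjoint_bdry G S' S v b1 a1 a3 fun w hw => ?_
      exact Finset.mem_compl.1 (hW'.2 (hW.1 hw))
    · refine subset_of_disjoint_bdry G S S' v a1 b1 b3 fun w hw => ?_
      exact Finset.mem_compl.1 (hW.2 (hW'.1 hw))
  have hIcard : ∀ S ∈ F, 2 ^ (n - (k + m)) ≤ (I S).card := by
    intro S hS
    obtain ⟨a1, a2, a3⟩ := hmem S hS
    have hsub : S ⊆ (bdry G S)ᶜ := by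
      intro w hw
      simp [bdry, hw]
    rw [hI]
    simp only
    rw [Finset.card_Icc_finset hsub, Finset.card_compl, Fintype.card_fin, a2]
    have := h S a1 a2 a3
    exact Nat.pow_le_pow_right (by norm_num) (by omega)
  have h1 : F.card * 2 ^ (n - (k + m)) ≤ 2 ^ n := by
    calc F.card * 2 ^ (n - (k + m)) = ∑ S ∈ F, 2 ^ (n - (k + m)) := by simp
      _ ≤ ∑ S ∈ F, (I S).card := Finset.sum_le_sum hIcard
      _ = (F.biUnion I).card := (Finset.card_biUnion hdisj).symm
      _ ≤ Fintype.card (Finset (Fin n)) := Finset.card_le_univ _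
      _ = 2 ^ n := by simp
  have h2 : 2 ^ n ≤ 2 ^ (k + m) * 2 ^ (n - (k + m)) := by
    rw [← pow_add]
    exact Nat.pow_le_pow_right (by norm_num) (by omega)
  exact Nat.le_of_mul_le_mul_right (h1.trans h2) (by positivity)

/-! ### The union bound over connected sets -/

/-- `G` has a connected set of size at least `K` whose total degree exceeds `D` times its size. -/
def Heavy {n : ℕ} (K D : ℝ) (G : SimpleGraph (Fin n)) : Prop :=
  ∃ S : Finset (Fin n), K ≤ S.card ∧ (G.induce (S : Set (Fin n))).Connected ∧
    D * S.card < (∑ u ∈ S, deg G u : ℕ)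

/-- For a fixed vertex set of size `k ≥ 1`: sum over the `k ^ k` parent maps of the probability
that the corresponding tree is present and that many edges touch the set. -/
lemma erProb_set_le {n : ℕ} {p s D : ℝ} (hp0 : 0 ≤ p) (hp1 : p ≤ 1) (hs : 0 ≤ s)
    (S : Finset (Fin n)) :
    erProb n p (fun G => (G.induce (S : Set (Fin n))).Connected ∧
        D * S.card < (∑ u ∈ S, deg G u : ℕ))
      ≤ (S.card : ℝ) ^ S.card * ((p * Real.exp s) ^ (S.card - 1) *
          Real.exp (p * Real.exp s * (S.card * n)) * Real.exp (-(s * (D * S.card / 2)))) := by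
  have h1 : erProb n p (fun G => (G.induce (S : Set (Fin n))).Connected ∧
        D * S.card < (∑ u ∈ S, deg G u : ℕ)) ≤
      erProb n p (fun G => ∃ f : S → S, (treeEdges f).card + 1 = S.card ∧
        (∀ e ∈ treeEdges f, e ∈ G.edgeSet) ∧ D * S.card / 2 ≤ (touching G S).card) := by
    refine erProb_mono hp0 hp1 fun G hG => ?_
    obtain ⟨f, hf1, hf2⟩ := exists_treeEdges G S hG.1
    refine ⟨f, hf2, hf1, ?_⟩
    have h2 : ((∑ u ∈ S, deg G u : ℕ) : ℝ) ≤ 2 * (touching G S).card := by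
      exact_mod_cast sum_deg_le G S
    linarith [hG.2]
  refine h1.trans ((erProb_exists_le hp0 hp1 _).trans ?_)
  have h3 : ∀ f : S → S, erProb n p (fun G => (treeEdges f).card + 1 = S.card ∧
        (∀ e ∈ treeEdges f, e ∈ G.edgeSet) ∧ D * S.card / 2 ≤ (touching G S).card) ≤
      (p * Real.exp s) ^ (S.card - 1) *
          Real.exp (p * Real.exp s * (S.card * n)) * Real.exp (-(s * (D * S.card / 2))) := by
    intro f
    by_cases hf : (treeEdges f).card + 1 = S.card
    · refine (erProb_mono hp0 hp1 fun G hG => hG.2).trans ?_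
      have := erProb_tree_and_many_le (M := D * S.card / 2) hp0 hp1 hs S (treeEdges f)
        (treeEdges_subset f) (treeEdges_touch f)
      rwa [show (treeEdges f).card = S.card - 1 by omega] at this
    · simp only [hf, false_and, erProb, if_false, Finset.sum_const_zero]
      positivity
  refine (Finset.sum_le_sum fun f _ => h3 f).trans (le_of_eq ?_)
  rw [Finset.sum_const, nsmul_eq_mul]
  simp

lemma choose_mul_pow_le (n k : ℕ) :
    (n.choose k : ℝ) * (k : ℝ) ^ k ≤ (n : ℝ) ^ k * Real.exp k := by
  have h1 : (n.choose k : ℝ) ≤ (n : ℝ) ^ k / k.factorial := Nat.choose_le_pow_div k n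
  have h2 : (k : ℝ) ^ k / k.factorial ≤ Real.exp k :=
    Real.pow_div_factorial_le_exp _ (Nat.cast_nonneg k) k
  have h3 : (0 : ℝ) < k.factorial := by positivity
  calc (n.choose k : ℝ) * (k : ℝ) ^ k ≤ (n : ℝ) ^ k / k.factorial * (k : ℝ) ^ k := by gcongr
    _ = (n : ℝ) ^ k * ((k : ℝ) ^ k / k.factorial) := by ring
    _ ≤ _ := by gcongr

/-- The properties of `Δ = 1 / (δ log (1/δ))` that are used. The last one rests on
`log Δ = t - log t` and `δ Δ = 1 / t` for `t = log (1/δ)`, and `log t ≤ t / e`. -/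
lemma Delta_props {δ : ℝ} (h0 : 0 < δ) (h1 : δ < 1) :
    Real.exp 1 ≤ 1 / (δ * Real.log (1 / δ)) ∧
    1 / δ ≤ 2 * (1 / (δ * Real.log (1 / δ)) * Real.log (1 / (δ * Real.log (1 / δ)))) := by
  set t := Real.log (1 / δ) with ht
  have htpos : 0 < t := Real.log_pos (by rw [lt_div_iff₀ h0]; linarith)
  have hlog : Real.log t ≤ t / Real.exp 1 := by
    have := Real.log_le_sub_one_of_pos (show 0 < t / Real.exp 1 by positivity)
    rw [Real.log_div htpos.ne' (Real.exp_pos 1).ne', Real.log_exp] at this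
    linarith
  have hlogD : Real.log (1 / (δ * t)) = t - Real.log t := by
    rw [one_div, Real.log_inv, Real.log_mul h0.ne' htpos.ne', ht, one_div, Real.log_inv]
    ring
  have he2 : (2 : ℝ) ≤ Real.exp 1 := by linarith [Real.add_one_le_exp (1 : ℝ)]
  have hDpos : 0 < 1 / (δ * t) := by positivity
  constructor
  · rw [← Real.le_log_iff_exp_le hDpos, hlogD]
    linarith [Real.log_le_sub_one_of_pos htpos]
  · rw [hlogD]
    have h2 : t / 2 ≤ t - Real.log t := by
      have : t / Real.exp 1 ≤ t / 2 := by gcongr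
      linarith
    calc 1 / δ = 2 * (1 / (δ * t) * (t / 2)) := by field_simp
      _ ≤ _ := by gcongr

/-- The contribution of sets of size `k` to the union bound. -/
lemma term_le {d δ A : ℝ} {n k : ℕ} (hd : 0 < d) (hδ : 0 < δ)
    (hA : Real.exp 1 ≤ A) (hA2 : 1 / δ ≤ 2 * (A * Real.log A)) (hn : 2 ≤ n)
    (hk : δ * Real.log n ≤ k) :
    (n.choose k : ℝ) * ((k : ℝ) ^ k * ((d / n * A) ^ (k - 1) *
          Real.exp (d / n * A * (k * n)) *
          Real.exp (-(Real.log A * ((18 + 4 * d) * A * k / 2))))) ≤ 1 / (d * n ^ 2) := by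
  have hA1 : 1 ≤ A := by linarith [Real.add_one_le_exp (1 : ℝ)]
  have hApos : 0 < A := by linarith
  have hn' : (2 : ℝ) ≤ n := by exact_mod_cast hn
  have hnpos : (0 : ℝ) < n := by linarith
  have hlogn : 0 < Real.log n := Real.log_pos (by linarith)
  have hkpos : (0 : ℝ) < k := lt_of_lt_of_le (by positivity) hk
  have hk0 : k ≠ 0 := by
    rintro rfl
    simp at hkpos
  set s := Real.log A with hs
  have hs1 : 1 ≤ s := by rwa [hs, Real.le_log_iff_exp_le hApos]
  have hes : Real.exp s = A := Real.exp_log hApos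
  have e1 : (d / n * A) ^ (k - 1) = (d / n * A) ^ k * (n / (d * A)) := by
    obtain ⟨j, rfl⟩ := Nat.exists_eq_succ_of_ne_zero hk0
    simp only [Nat.succ_eq_add_one, Nat.add_sub_cancel, pow_succ]
    field_simp
  have e2 : Real.exp (d / n * A * (k * n)) = Real.exp (d * A * k) := by
    congr 1
    field_simp
  have e3 : (n : ℝ) ^ k * (d / n * A) ^ k ≤ Real.exp (k * (d + s)) := by
    rw [← mul_pow, show (n : ℝ) * (d / n * A) = d * A by field_simp, Real.exp_nat_mul]
    refine pow_le_pow_left₀ (by positivity) ?_ _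
    rw [Real.exp_add, hes]
    gcongr
    linarith [Real.add_one_le_exp d]
  have e4 : (n : ℝ) / (d * A) ≤ n / d := by
    gcongr
    nlinarith
  have hexp : (k : ℝ) + k * (d + s) + d * A * k - s * ((18 + 4 * d) * A * k / 2)
      ≤ -(3 * Real.log n) := by
    -- each of `1`, `d`, `s`, `d A` is at most a multiple of `A s`, and `3 / δ ≤ 6 A s`
    have hAs1 : A ≤ A * s := by nlinarith
    have hAs2 : s ≤ A * s := by nlinarith
    have hAs3 : 1 ≤ A * s := by linarith
    have hlk : Real.log n ≤ k * (1 / δ) := by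
      rw [mul_one_div, le_div_iff₀ hδ]
      linarith
    have hlk2 : Real.log n ≤ k * (2 * (A * s)) := hlk.trans (by gcongr)
    have hin : 1 + (d + s) + d * A - s * ((18 + 4 * d) * A / 2) ≤ -(6 * (A * s)) := by
      nlinarith
    nlinarith
  calc (n.choose k : ℝ) * ((k : ℝ) ^ k * ((d / n * A) ^ (k - 1) *
          Real.exp (d / n * A * (k * n)) * Real.exp (-(s * ((18 + 4 * d) * A * k / 2)))))
      = ((n.choose k : ℝ) * (k : ℝ) ^ k) * ((d / n * A) ^ k * (n / (d * A)) *
          Real.exp (d * A * k) * Real.exp (-(s * ((18 + 4 * d) * A * k / 2)))) := by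
        rw [e1, e2]
        ring
    _ ≤ ((n : ℝ) ^ k * Real.exp k) * ((d / n * A) ^ k * (n / d) *
          Real.exp (d * A * k) * Real.exp (-(s * ((18 + 4 * d) * A * k / 2)))) := by
        gcongr ?_ * (_ * ?_ * _ * _)
        exact choose_mul_pow_le n k
    _ = (n / d) * (((n : ℝ) ^ k * (d / n * A) ^ k) * (Real.exp k *
          Real.exp (d * A * k) * Real.exp (-(s * ((18 + 4 * d) * A * k / 2))))) := by ring
    _ ≤ (n / d) * (Real.exp (k * (d + s)) * (Real.exp k *
          Real.exp (d * A * k) * Real.exp (-(s * ((18 + 4 * d) * A * k / 2))))) := by gcongr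
    _ = (n / d) * Real.exp ((k : ℝ) + k * (d + s) + d * A * k
          - s * ((18 + 4 * d) * A * k / 2)) := by
        rw [← Real.exp_add, ← Real.exp_add, ← Real.exp_add]
        congr 2
        ring
    _ ≤ (n / d) * Real.exp (-(3 * Real.log n)) := by gcongr
    _ = 1 / (d * n ^ 2) := by
        rw [Real.exp_neg, mul_comm 3, Real.exp_mul, Real.exp_log hnpos]
        norm_cast
        push_cast
        field_simp

lemma erProb_heavy_le {d δ A : ℝ} {n : ℕ} (hd : 0 < d) (hδ : 0 < δ)
    (hA : Real.exp 1 ≤ A) (hA2 : 1 / δ ≤ 2 * (A * Real.log A)) (hn : 2 ≤ n) (hdn : d ≤ n) :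
    erProb n (d / n) (Heavy (δ * Real.log n) ((18 + 4 * d) * A))
      ≤ (n + 1) / (d * n ^ 2) := by
  have hA1 : 1 ≤ A := by linarith [Real.add_one_le_exp (1 : ℝ)]
  have hnpos : (0 : ℝ) < n := by
    have : (2 : ℝ) ≤ n := by exact_mod_cast hn
    linarith
  have hp0 : 0 ≤ d / (n : ℝ) := by positivity
  have hp1 : d / (n : ℝ) ≤ 1 := by rwa [div_le_one hnpos]
  have hes : Real.exp (Real.log A) = A := Real.exp_log (by linarith)
  set g : ℕ → ℝ := fun k => if δ * Real.log n ≤ k then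
    (k : ℝ) ^ k * ((d / n * A) ^ (k - 1) * Real.exp (d / n * A * (k * n)) *
      Real.exp (-(Real.log A * ((18 + 4 * d) * A * k / 2)))) else 0 with hg
  have h1 : erProb n (d / n) (Heavy (δ * Real.log n) ((18 + 4 * d) * A)) ≤
      ∑ S : Finset (Fin n), g S.card := by
    refine (erProb_exists_le hp0 hp1 _).trans (Finset.sum_le_sum fun S _ => ?_)
    by_cases hS : δ * Real.log n ≤ S.card
    · simp only [hg, if_pos hS]
      refine (erProb_mono hp0 hp1 fun G hG => hG.2).trans ?_
      have := erProb_set_le (s := Real.log A) (D := (18 + 4 * d) * A) hp0 hp1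
        (Real.log_nonneg hA1) S
      rwa [hes] at this
    · simp [hg, hS, erProb]
  refine h1.trans ?_
  rw [← Finset.powerset_univ, Finset.sum_powerset_apply_card, Finset.card_univ,
    Fintype.card_fin]
  calc ∑ k ∈ Finset.range (n + 1), n.choose k • g k
      ≤ ∑ k ∈ Finset.range (n + 1), 1 / (d * (n : ℝ) ^ 2) := by
        refine Finset.sum_le_sum fun k _ => ?_
        rw [nsmul_eq_mul]
        by_cases hk : δ * Real.log n ≤ k
        · simp only [hg, if_pos hk]
          exact term_le hd hδ hA hA2 hn hk
        · simp only [hg, if_neg hk]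
          simp only [mul_zero]
          positivity
    _ = _ := by
        rw [Finset.sum_const, Finset.card_range, nsmul_eq_mul]
        push_cast
        ring

/-- Outside the event `Heavy`, both conclusions hold for every connected set. -/
lemma conclusion_of_not_heavy {n k : ℕ} {K D A L : ℝ} (G : SimpleGraph (Fin n))
    (hA : 1 ≤ A) (hD : 1 ≤ D) (hL : L = 2 * D) (hG : ¬ Heavy K (D * A) G) (hk : K ≤ k)
    (v : Fin n) :
    (Nat.card {S : Finset (Fin n) //
        v ∈ S ∧ S.card = k ∧ (G.induce (S : Set (Fin n))).Connected} : ℝ)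
      ≤ (2 * Real.exp 1) ^ (A * L * k) ∧
    ∀ S : Finset (Fin n), v ∈ S → S.card = k → (G.induce (S : Set (Fin n))).Connected →
      (k : ℝ) / 2 ≤ (S.filter (fun u => (deg G u : ℝ) < L * A)).card := by
  have hdeg : ∀ S : Finset (Fin n), S.card = k → (G.induce (S : Set (Fin n))).Connected →
      ((∑ u ∈ S, deg G u : ℕ) : ℝ) ≤ D * A * k := by
    intro S hS hc
    by_contra! hlt
    exact hG ⟨S, by rwa [hS], hc, by rwa [hS]⟩
  have hDA : 1 ≤ D * A := by nlinarith
  have hk0 : (0 : ℝ) ≤ k := Nat.cast_nonneg k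
  constructor
  · have hcount := card_connected_le G v k ⌊D * A * k⌋₊ fun S _ hS hc =>
      (card_bdry_le G S).trans (Nat.le_floor (hdeg S hS hc))
    have hfl : (⌊D * A * k⌋₊ : ℝ) ≤ D * A * k := Nat.floor_le (by positivity)
    have he : (2 : ℝ) ≤ 2 * Real.exp 1 := by linarith [Real.add_one_le_exp (1 : ℝ)]
    calc _ ≤ ((2 : ℝ) ^ (k + ⌊D * A * k⌋₊)) := by exact_mod_cast hcount
      _ = (2 : ℝ) ^ ((k + ⌊D * A * k⌋₊ : ℕ) : ℝ) := (Real.rpow_natCast _ _).symm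
      _ ≤ (2 : ℝ) ^ (A * L * k) := by
          refine Real.rpow_le_rpow_of_exponent_le (by norm_num) ?_
          push_cast
          rw [hL]
          nlinarith
      _ ≤ _ := by
          refine Real.rpow_le_rpow (by norm_num) he ?_
          rw [hL]
          positivity
  · intro S _ hS hc
    have hsplit := Finset.card_filter_add_card_filter_not (s := S)
      (fun u => (deg G u : ℝ) < L * A)
    set B := S.filter (fun u => ¬ (deg G u : ℝ) < L * A) with hB
    have h1 : (B.card : ℝ) * (L * A) ≤ D * A * k := by
      refine le_trans ?_ (hdeg S hS hc)
      push_cast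
      calc (B.card : ℝ) * (L * A) = ∑ u ∈ B, L * A := by simp
        _ ≤ ∑ u ∈ B, (deg G u : ℝ) := Finset.sum_le_sum fun u hu =>
            not_lt.1 (Finset.mem_filter.1 hu).2
        _ ≤ ∑ u ∈ S, (deg G u : ℝ) := Finset.sum_le_sum_of_subset_of_nonneg
            (Finset.filter_subset _ _) fun _ _ _ => Nat.cast_nonneg _
    have h2 : (B.card : ℝ) * 2 ≤ k := by
      rw [hL] at h1
      nlinarith
    have h3 : ((S.filter (fun u => (deg G u : ℝ) < L * A)).card : ℝ) + B.card = k := by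
      rw [← hS]
      exact_mod_cast hsplit
    linarith

/-- there is `L > 0` such that for any `δ ∈ (0,1)`, whp over `G ∼ G(n,d/n)`:
with `Δ = 1/(δ log(1/δ))`, for all integers `k ≥ δ log n` and every vertex `v`, the number
of connected sets `S ∋ v` with `|S| = k` is at most `(2e)^{ΔLk}`, and every such set
contains at least `k/2` vertices of degree less than `LΔ`. -/
theorem stmt13 (d : ℝ) (hd : 0 < d) :
    ∃ L : ℝ, 0 < L ∧ ∀ δ : ℝ, 0 < δ → δ < 1 →
      Filter.Tendsto (fun n : ℕ => erProb n (d / n) (fun G =>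
          ∀ k : ℕ, δ * Real.log n ≤ k → ∀ v : Fin n,
            (Nat.card {S : Finset (Fin n) //
                v ∈ S ∧ S.card = k ∧ (G.induce (S : Set (Fin n))).Connected} : ℝ)
              ≤ (2 * Real.exp 1) ^ ((1 / (δ * Real.log (1 / δ))) * L * k) ∧
            ∀ S : Finset (Fin n), v ∈ S → S.card = k →
              (G.induce (S : Set (Fin n))).Connected →
              (k : ℝ) / 2 ≤
                (S.filter (fun u => (deg G u : ℝ) < L * (1 / (δ * Real.log (1 / δ))))).card))
        Filter.atTop (nhds 1) := by
  refine ⟨2 * (18 + 4 * d), by positivity, fun δ h0 h1 => ?_⟩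
  obtain ⟨hA, hA2⟩ := Delta_props h0 h1
  set A := 1 / (δ * Real.log (1 / δ)) with hAdef
  have hA1 : 1 ≤ A := by linarith [Real.add_one_le_exp (1 : ℝ)]
  have hlim : Filter.Tendsto (fun n : ℕ => 1 - ((n : ℝ) + 1) / (d * (n : ℝ) ^ 2))
      Filter.atTop (nhds 1) := by
    have hz : Filter.Tendsto (fun n : ℕ => ((n : ℝ))⁻¹) Filter.atTop (nhds 0) :=
      tendsto_inv_atTop_nhds_zero_nat
    have h2 : Filter.Tendsto (fun n : ℕ => 1 - d⁻¹ * (((n : ℝ))⁻¹ + ((n : ℝ))⁻¹ * ((n : ℝ))⁻¹))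
        Filter.atTop (nhds (1 - d⁻¹ * (0 + 0 * 0))) :=
      tendsto_const_nhds.sub ((hz.add (hz.mul hz)).const_mul _)
    simp only [mul_zero, add_zero, sub_zero] at h2
    refine h2.congr' ?_
    filter_upwards [eventually_ge_atTop 1] with n hn
    have hn0 : (n : ℝ) ≠ 0 := by
      have : n ≠ 0 := by omega
      exact_mod_cast this
    field_simp
  have hev : ∀ᶠ n : ℕ in Filter.atTop, 2 ≤ n ∧ d ≤ (n : ℝ) :=
    (eventually_ge_atTop 2).and (tendsto_natCast_atTop_atTop.eventually_ge_atTop d)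
  refine tendsto_of_tendsto_of_tendsto_of_le_of_le' hlim tendsto_const_nhds ?_ ?_
  · filter_upwards [hev] with n hn
    have hnpos : (0 : ℝ) < n := lt_of_lt_of_le hd hn.2
    have hp0 : 0 ≤ d / (n : ℝ) := by positivity
    have hp1 : d / (n : ℝ) ≤ 1 := (div_le_one hnpos).2 hn.2
    have hheavy := erProb_heavy_le hd h0 hA hA2 hn.1 hn.2
    have hcompl := erProb_add_not n (d / n) (Heavy (δ * Real.log n) ((18 + 4 * d) * A))
    refine le_trans ?_ (erProb_mono hp0 hp1
      (P := fun G => ¬ Heavy (δ * Real.log n) ((18 + 4 * d) * A) G)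
      (fun G hG k hk v => conclusion_of_not_heavy G hA1 (by linarith) rfl hG hk v))
    linarith
  · filter_upwards [hev] with n hn
    have hnpos : (0 : ℝ) < n := lt_of_lt_of_le hd hn.2
    have hp0 : 0 ≤ d / (n : ℝ) := by positivity
    have hp1 : d / (n : ℝ) ≤ 1 := (div_le_one hnpos).2 hn.2
    refine le_of_le_of_eq (le_add_of_nonneg_right ?_) (erProb_add_not n (d / n) _)
    exact erProb_nonneg hp0 hp1 _
end

section
/- Let G=(V,E) be a finite graph, v∈V a vertex, and ℓ≥1 an integer. Then the number of connected sets S⊆V with v∈S and deg_G(S)=ℓ is at most (2e)^{2ℓ−1}. -/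
/-!
The bound follows from a percolation argument, which in fact gives the stronger estimate `2 ^ ℓ`.
For `S ⊆ V` let `nbhd G S` be the set of vertices with a neighbour in `S`; it has at most
`deg_G(S)` elements (`card_nbhd_le`). Keep every vertex of `G` independently with probability
`1/2`, and let `W` be the set of kept vertices. The event `W ∩ nbhd G S = S ∩ nbhd G S`
(`trace G S`) has probability `2 ^ (-|nbhd G S|) ≥ 2 ^ (-ℓ)` when `deg_G(S) = ℓ`. If `v ∈ S` and `S`
is connected, this event says, up to the status of `v`, that `S` is the component of `v` in `W`, so
the events for distinct `S` are disjoint (`subset_of_mem_trace`), and there are at most `2 ^ ℓ`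
of them.
-/

open Classical Filter

/-- The open neighbourhood of `S`: all vertices, inside or outside `S`, with a neighbour in `S`. -/
noncomputable def nbhd {V : Type} [Fintype V] (G : SimpleGraph V) (S : Finset V) : Finset V :=
  S.biUnion fun u => Finset.univ.filter fun w => G.Adj u w

/-- The sets `W` with `W ∩ nbhd G S = S ∩ nbhd G S`, written as an interval of the Boolean
lattice of vertex sets. -/
noncomputable def trace {V : Type} [Fintype V] (G : SimpleGraph V) (S : Finset V) :
    Finset (Finset V) :=
  Finset.Icc (S ∩ nbhd G S) ((S ∩ nbhd G S) ∪ (nbhd G S)ᶜ)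

lemma mem_nbhd {V : Type} [Fintype V] {G : SimpleGraph V} {S : Finset V} {w : V} :
    w ∈ nbhd G S ↔ ∃ u ∈ S, G.Adj u w := by
  simp [nbhd]

lemma card_nbhd_le {V : Type} [Fintype V] (G : SimpleGraph V) (S : Finset V) :
    (nbhd G S).card ≤ ∑ u ∈ S, deg G u := by
  refine Finset.card_biUnion_le.trans (Finset.sum_le_sum fun u _ => le_of_eq ?_)
  rw [deg, Nat.card_eq_fintype_card, Fintype.card_subtype]

lemma card_trace {V : Type} [Fintype V] (G : SimpleGraph V) (S : Finset V) :
    (trace G S).card = 2 ^ (Fintype.card V - (nbhd G S).card) := by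
  have hd : Disjoint (S ∩ nbhd G S) (nbhd G S)ᶜ :=
    disjoint_compl_right.mono_left Finset.inter_subset_right
  rw [trace, Finset.card_Icc_finset Finset.subset_union_left, Finset.card_union_of_disjoint hd,
    Finset.card_compl, Nat.add_sub_cancel_left]

/-- Along a path in `T` starting at `v`, no step can leave `S`: if `a ∈ S ∩ T` and `b ∈ T` are
adjacent, then `b` lies in both neighbourhoods, so `b ∈ T` gives `b ∈ W`, which gives `b ∈ S`. -/
lemma subset_of_mem_trace {V : Type} [Fintype V] {G : SimpleGraph V} {S T W : Finset V} {v : V}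
    (hvS : v ∈ S) (hvT : v ∈ T) (hT : (G.induce (T : Set V)).Connected)
    (hWS : W ∈ trace G S) (hWT : W ∈ trace G T) : T ⊆ S := by
  intro x hx
  have hr := hT.preconnected ⟨v, hvT⟩ ⟨x, hx⟩
  rw [SimpleGraph.reachable_iff_reflTransGen] at hr
  suffices h : ∀ y : (T : Set V),
      Relation.ReflTransGen (G.induce (T : Set V)).Adj ⟨v, hvT⟩ y → y.1 ∈ S from h _ hr
  intro y hy
  induction hy with
  | refl => exact hvS
  | @tail a b _ hab ih =>
    have hadj : G.Adj a.1 b.1 := hab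
    have hbT : b.1 ∈ nbhd G T := mem_nbhd.2 ⟨a.1, a.2, hadj⟩
    have hbS : b.1 ∈ nbhd G S := mem_nbhd.2 ⟨a.1, ih, hadj⟩
    have hbW : b.1 ∈ W := (Finset.mem_Icc.1 hWT).1 (Finset.mem_inter.2 ⟨b.2, hbT⟩)
    have := (Finset.mem_Icc.1 hWS).2 hbW
    simp only [Finset.mem_union, Finset.mem_inter, Finset.mem_compl] at this
    tauto

/-- in any finite graph, the number of connected vertex sets `S ∋ v` with
`deg_G(S) = ℓ` is at most `(2e)^{2ℓ-1}`. -/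
theorem stmt16 (V : Type) [Fintype V] (G : SimpleGraph V) (v : V) (ℓ : ℕ) (hℓ : 1 ≤ ℓ) :
    (Nat.card {S : Finset V //
        v ∈ S ∧ (G.induce (S : Set V)).Connected ∧ ∑ u ∈ S, deg G u = ℓ} : ℝ)
      ≤ (2 * Real.exp 1) ^ (2 * ℓ - 1) := by
  rw [Nat.card_eq_fintype_card, Fintype.card_subtype]
  set F : Finset (Finset V) := Finset.univ.filter fun S =>
    v ∈ S ∧ (G.induce (S : Set V)).Connected ∧ ∑ u ∈ S, deg G u = ℓ with hF
  have hdisj : ∀ S ∈ F, ∀ T ∈ F, S ≠ T → Disjoint (trace G S) (trace G T) := by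
    intro S hS T hT hne
    obtain ⟨hvS, hcS, -⟩ := (Finset.mem_filter.1 hS).2
    obtain ⟨hvT, hcT, -⟩ := (Finset.mem_filter.1 hT).2
    refine Finset.disjoint_left.2 fun W hWS hWT => hne ?_
    exact (subset_of_mem_trace hvT hvS hcS hWT hWS).antisymm
      (subset_of_mem_trace hvS hvT hcT hWS hWT)
  have hsum : ∑ S ∈ F, (trace G S).card ≤ 2 ^ Fintype.card V := by
    rw [← Finset.card_biUnion hdisj, ← Fintype.card_finset]
    exact Finset.card_le_univ _
  have hlow : ∀ S ∈ F, 2 ^ Fintype.card V ≤ 2 ^ ℓ * (trace G S).card := by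
    intro S hS
    have h := card_nbhd_le G S
    rw [(Finset.mem_filter.1 hS).2.2.2] at h
    rw [card_trace, ← pow_add]
    exact Nat.pow_le_pow_right two_pos (by omega)
  have hcard : F.card ≤ 2 ^ ℓ := by
    refine Nat.le_of_mul_le_mul_right ?_ (pow_pos two_pos (Fintype.card V))
    calc F.card * 2 ^ Fintype.card V = ∑ _S ∈ F, 2 ^ Fintype.card V := by simp
      _ ≤ ∑ S ∈ F, 2 ^ ℓ * (trace G S).card := Finset.sum_le_sum hlow
      _ = 2 ^ ℓ * ∑ S ∈ F, (trace G S).card := by rw [Finset.mul_sum]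
      _ ≤ 2 ^ ℓ * 2 ^ Fintype.card V := Nat.mul_le_mul_left _ hsum
  have he : (1 : ℝ) ≤ Real.exp 1 := Real.one_le_exp zero_le_one
  calc (F.card : ℝ) ≤ 2 ^ ℓ := by exact_mod_cast hcard
    _ ≤ 2 ^ (2 * ℓ - 1) := pow_le_pow_right₀ one_le_two (by omega)
    _ ≤ (2 * Real.exp 1) ^ (2 * ℓ - 1) := by gcongr; linarith
end
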